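/- For every k ≥ 1 and positive integers p_1, …, p_k, there exists a surjective group homomorphism from the palindromic group E_{p_1,…,p_k,p_k,…,p_1} (on 2k generators, with the sequence of exponents p_1,…,p_k,p_k,…,p_1) onto the free product ℤ/p_1 * ℤ/p_2 * ⋯ * ℤ/p_k, sending x_i to the generator of the i-th cyclic free factor for 1 ≤ i ≤ k and x_{2k+1-i} to its inverse. -/

import Mathlib

/-!
Each relator of the palindromic group dies under `x_i ↦ g_i`, `x_{2k+1-i} ↦ g_i⁻¹`, where `g_i`
generates the `i`-th free factor: the power relators because `g_i` and `g_i⁻¹` have order dividing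
`p_i`, and the long relator because its image `g_1 ⋯ g_k g_k⁻¹ ⋯ g_1⁻¹` telescopes
(`prod_palindromicInv`). The resulting homomorphism is surjective since its range contains every
`g_i`, and these generate the free product.
-/

/-- The sequence `g_1, …, g_k, g_k⁻¹, …, g_1⁻¹` of length `2k` attached to `g_1, …, g_k`. -/
def palindromicInv {G : Type*} [Group G] {k : ℕ} (g : Fin k → G) (i : Fin (2 * k)) : G :=
  if h : i.val < k then g ⟨i.val, h⟩ else (g ⟨2 * k - 1 - i.val, by omega⟩)⁻¹

theorem palindromicInv_left {G : Type*} [Group G] {k : ℕ} (g : Fin k → G) (i : Fin k)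
    (j : Fin (2 * k)) (hj : j.val = i.val) : palindromicInv g j = g i := by
  simp [palindromicInv, hj]

theorem palindromicInv_right {G : Type*} [Group G] {k : ℕ} (g : Fin k → G) (i : Fin k)
    (j : Fin (2 * k)) (hj : j.val = 2 * k - 1 - i.val) : palindromicInv g j = (g i)⁻¹ := by
  have h : ¬ (2 * k - 1 - i.val < k) := by omega
  have h2 : 2 * k - 1 - (2 * k - 1 - i.val) = i.val := by omega
  simp [palindromicInv, hj, h, h2]

theorem prod_palindromicInv {G : Type*} [Group G] {k : ℕ} (g : Fin k → G) :
    (List.ofFn (palindromicInv g)).prod = 1 := by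
  have key : List.ofFn (palindromicInv g) =
      List.ofFn g ++ ((List.ofFn g).map fun x => x⁻¹).reverse := by
    apply List.ext_getElem
    · simp; omega
    · intro n h1 h2
      simp only [List.length_ofFn] at h1
      by_cases h : n < k
      · simp [palindromicInv, h]
      · have e : 2 * k - 1 - n = k - 1 - (n - k) := by omega
        simp [palindromicInv, h, List.getElem_append, e]
  rw [key, List.prod_append, ← List.prod_inv_reverse, mul_inv_cancel]

/-- Every index in `Fin (2 * k)` is either `i` or the mirror image of `i` for some `i : Fin k`. -/
theorem exists_eq_or_mirror {k : ℕ} (j : Fin (2 * k)) :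
    ∃ i : Fin k, j.val = i.val ∨ j.val = 2 * k - 1 - i.val := by
  by_cases h : j.val < k
  · exact ⟨⟨j.val, h⟩, Or.inl rfl⟩
  · exact ⟨⟨2 * k - 1 - j.val, by omega⟩, Or.inr (by simp only; omega)⟩

/-- For every `k ≥ 1` and positive integers `p_1, …, p_k`, there is a surjective
group homomorphism from the palindromic group `E_{p_1,…,p_k,p_k,…,p_1}` (on `2k` generators,
with exponent sequence `p_1,…,p_k,p_k,…,p_1`) onto the free product `ℤ/p_1 * ⋯ * ℤ/p_k`,
sending `x_i` to the generator of the `i`-th cyclic free factor for `1 ≤ i ≤ k`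
and `x_{2k+1-i}` to its inverse. -/
theorem statement1 (k : ℕ) (hk : 1 ≤ k) (p : Fin k → ℕ) (hp : ∀ i, 0 < p i)
    (P : Fin (2 * k) → ℕ)
    (hP1 : ∀ i : Fin k, P ⟨i.val, by have := i.isLt; omega⟩ = p i)
    (hP2 : ∀ i : Fin k, P ⟨2 * k - 1 - i.val, by omega⟩ = p i) :
    ∃ f : PresentedGroup {w : FreeGroup (Fin (2 * k)) |
          (∃ i : Fin (2 * k), w = FreeGroup.of i ^ P i) ∨
          w = (List.ofFn fun i : Fin (2 * k) => FreeGroup.of i).prod} →*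
        Monoid.CoprodI (fun i : Fin k => Multiplicative (ZMod (p i))),
      Function.Surjective f ∧
      ∀ i : Fin k,
        f (PresentedGroup.of ⟨i.val, by have := i.isLt; omega⟩) =
          Monoid.CoprodI.of (M := fun i : Fin k => Multiplicative (ZMod (p i)))
            (Multiplicative.ofAdd (1 : ZMod (p i))) ∧
        f (PresentedGroup.of ⟨2 * k - 1 - i.val, by omega⟩) =
          (Monoid.CoprodI.of (M := fun i : Fin k => Multiplicative (ZMod (p i)))
            (Multiplicative.ofAdd (1 : ZMod (p i))))⁻¹ := by
  set g : Fin k → Monoid.CoprodI (fun i : Fin k => Multiplicative (ZMod (p i))) := fun i =>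
    Monoid.CoprodI.of (M := fun i : Fin k => Multiplicative (ZMod (p i)))
      (Multiplicative.ofAdd (1 : ZMod (p i))) with hg
  have hgp : ∀ i, g i ^ p i = 1 := by
    intro i
    simp only [hg]
    rw [← map_pow, ← ofAdd_nsmul]
    simp
  have hpow : ∀ j, palindromicInv g j ^ P j = 1 := by
    intro j
    obtain ⟨i, hj | hj⟩ := exists_eq_or_mirror j
    · have hPj : P j = p i := by rw [← hP1 i]; exact congrArg P (Fin.ext hj)
      rw [palindromicInv_left g i j hj, hPj, hgp]
    · have hPj : P j = p i := by rw [← hP2 i]; exact congrArg P (Fin.ext hj)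
      rw [palindromicInv_right g i j hj, hPj, inv_pow, hgp, inv_one]
  refine ⟨PresentedGroup.toGroup (f := palindromicInv g) ?_, ?_, ?_⟩
  · rintro w (⟨i, rfl⟩ | rfl)
    · simpa using hpow i
    · rw [map_list_prod, List.map_ofFn]
      have e : (FreeGroup.lift (palindromicInv g) ∘ fun i => FreeGroup.of i) =
          palindromicInv g := by
        funext i
        simp
      rw [e, prod_palindromicInv]
  · rw [← MonoidHom.range_eq_top, eq_top_iff]
    rintro x -
    induction x using Monoid.CoprodI.induction_on with
    | one => exact one_mem _
    | of i m =>
      -- `ZMod (p i)` is generated by `1`, so `m` is an integer power of the standard generator.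
      obtain ⟨n, hn⟩ := ZMod.intCast_surjective m.toAdd
      have hm : m = Multiplicative.ofAdd (1 : ZMod (p i)) ^ n := by
        rw [← ofAdd_zsmul, zsmul_one, hn, ofAdd_toAdd]
      rw [hm, map_zpow]
      refine Subgroup.zpow_mem _ (MonoidHom.mem_range.2
        ⟨PresentedGroup.of ⟨i.val, by have := i.isLt; omega⟩, ?_⟩) n
      rw [PresentedGroup.toGroup.of, palindromicInv_left g i _ rfl]
    | mul x y hx hy => exact mul_mem hx hy
  · intro i
    rw [PresentedGroup.toGroup.of, PresentedGroup.toGroup.of]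
    exact ⟨palindromicInv_left g i _ rfl, palindromicInv_right g i _ rfl⟩
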